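/- Let b ∈ (0,1) and let μ be a totally-connected, b-marginally bounded probability distribution on [q]^V. Then for every nonempty subset U ⊆ V, every feasible boundary condition ξ on V∖U, and every function f : Ω_U^ξ → ℝ≥0 (where Ω_U^ξ is the set of feasible configurations on U given ξ), one has Ent_U^ξ(f) ≤ (3·|U|²·log(1/b)/(2·b^{2|U|+2}))·Σ_{v∈U} μ_U^ξ[Ent_v(f)], where μ_U^ξ[Ent_v(f)] denotes the expectation under μ_U^ξ of the conditional entropy Ent at the single vertex v (conditioning on ξ and on the configuration on U∖{v}). -/

import Mathlib

/-!
Write `π = μ_U^ξ`, `n = |U|`, `g = √f`, and let `M`, `a` be the maximum and minimum of `g` over the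
support of `π`.

* *Upper bound on the global entropy.* The inequality `log t ≤ t - 1`, used with reference value
  `M²` in place of the mean, gives `Ent_π(f) ≤ 3 (M - a)²` (`entropy_le_three_mul_sq`).
* *Lower bound on the local entropy.* The same inequality gives `Ent ≥ Var(√f)`
  (`variance_sqrt_le_entropy`); if `σ, σ'` are feasible and differ only at `v`, each has conditional
  probability at least `b` at `v`, whence `b² (g σ - g σ')² ≤ Ent_v^σ(f)`
  (`sq_mul_sq_le_entropy`).
* *Path argument.* By total connectedness a simple path in the Hamming graph joins a maximiser to a
  minimiser of `g`. Cauchy–Schwarz along this path (`sq_sub_le_length_mul_sum`) gives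
  `(M - a)² ≤ ℓ b⁻² ∑_σ ∑_v Ent_v^σ(f)`, where `ℓ` is its length. Every feasible `σ` has
  `π σ ≥ bⁿ` (`pow_card_le_condDist`), so the double sum is at most `b⁻ⁿ ∑_v π[Ent_v f]`, and
  `(ℓ + 1) bⁿ ≤ 1`.

Altogether `Ent_π(f) ≤ 3 ℓ b^{-(n+2)} ∑_v π[Ent_v f]`. Since `ℓ bⁿ ≤ 1 - bⁿ ≤ n log (1/b)`, this
is the claim when `n ≥ 2`. When `n = 1` the sum on the right is `Ent_π(f)` itself, and the
constant is at least `1` unless `b > 1/2`, in which case `ℓ = 0` and `Ent_π(f) = 0`.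
-/

open Finset

attribute [local instance] Classical.propDecidable

noncomputable section

variable {V : Type} [Fintype V] [DecidableEq V] {q : ℕ}

/-- Probability that a sample from `μ` agrees with `τ` on `Λ`. -/
def prAgree (μ : (V → Fin q) → ℝ) (Λ : Finset V) (τ : V → Fin q) : ℝ :=
  ∑ σ : V → Fin q, if ∀ v ∈ Λ, σ v = τ v then μ σ else 0

/-- Conditional probability that `σ v = i` given that `σ` agrees with `τ` on `Λ`. -/
def condProb (μ : (V → Fin q) → ℝ) (Λ : Finset V) (τ : V → Fin q) (v : V) (i : Fin q) : ℝ :=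
  prAgree μ (insert v Λ) (Function.update τ v i) / prAgree μ Λ τ

/-- `μ` is `b`-marginally bounded: conditioned on any feasible boundary condition on a
proper subset `Λ` of the vertices, every feasible spin at any unassigned vertex has
conditional probability at least `b`. -/
def MarginallyBounded (μ : (V → Fin q) → ℝ) (b : ℝ) : Prop :=
  ∀ Λ : Finset V, Λ ≠ Finset.univ → ∀ τ : V → Fin q, 0 < prAgree μ Λ τ →
    ∀ v ∉ Λ, ∀ i : Fin q, 0 < condProb μ Λ τ v i → b ≤ condProb μ Λ τ v i

/-- The index set of the influence matrix: pairs `(u,i)` with `u` unassigned and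
spin `i` feasible at `u` given the boundary condition. -/
abbrev InfIdx (μ : (V → Fin q) → ℝ) (Λ : Finset V) (τ : V → Fin q) : Type :=
  {p : V × Fin q // p.1 ∉ Λ ∧ 0 < condProb μ Λ τ p.1 p.2}

/-- The influence matrix `Ψ^τ`. -/
def inflMatrix (μ : (V → Fin q) → ℝ) (Λ : Finset V) (τ : V → Fin q) :
    Matrix (InfIdx μ Λ τ) (InfIdx μ Λ τ) ℝ :=
  Matrix.of fun p r =>
    if p.1.1 = r.1.1 then 0
    else condProb μ (insert p.1.1 Λ) (Function.update τ p.1.1 p.1.2) r.1.1 r.1.2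
      - condProb μ Λ τ r.1.1 r.1.2

/-- `μ` is `η`-spectrally independent: every real eigenvalue of every influence matrix
`Ψ^τ` is at most `η`. -/
def SpectrallyIndependent (μ : (V → Fin q) → ℝ) (η : ℝ) : Prop :=
  ∀ Λ : Finset V, Λ ≠ Finset.univ → ∀ τ : V → Fin q, 0 < prAgree μ Λ τ →
    ∀ (t : ℝ) (x : InfIdx μ Λ τ → ℝ), x ≠ 0 →
      (inflMatrix μ Λ τ).mulVec x = t • x → t ≤ η

/-- Two configurations are adjacent in the Hamming graph iff they differ at exactly one
vertex. -/
def HammingAdj (σ σ' : V → Fin q) : Prop := ∃! v : V, σ v ≠ σ' v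

/-- `μ` is totally-connected: for every nonempty `S ⊆ V` and feasible boundary condition
`τ` on `V∖S`, the set of feasible configurations given `τ` is connected in the Hamming
graph (moving only through feasible configurations). -/
def TotallyConnected (μ : (V → Fin q) → ℝ) : Prop :=
  ∀ S : Finset V, S.Nonempty → ∀ τ : V → Fin q, 0 < prAgree μ Sᶜ τ →
    ∀ σ σ' : V → Fin q,
      0 < μ σ → (∀ v ∈ Sᶜ, σ v = τ v) →
      0 < μ σ' → (∀ v ∈ Sᶜ, σ' v = τ v) →
      Relation.ReflTransGen
        (fun a b => HammingAdj a b ∧ 0 < μ b ∧ ∀ v ∈ Sᶜ, b v = τ v) σ σ'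

/-- Expectation of `f` under `π`. -/
def expec (π f : (V → Fin q) → ℝ) : ℝ := ∑ σ, π σ * f σ

/-- Entropy `Ent_π(f) = π(f·log(f/π(f)))` (with the conventions `0·log 0 = 0` and
`log 0 = 0`, so that the entropy vanishes when `π(f) = 0`). -/
def entropy (π f : (V → Fin q) → ℝ) : ℝ :=
  ∑ σ, π σ * f σ * Real.log (f σ / expec π f)

/-- Conditional distribution `μ_S^τ` on configurations agreeing with `τ` outside `S`. -/
def condDist (μ : (V → Fin q) → ℝ) (S : Finset V) (τ : V → Fin q) : (V → Fin q) → ℝ :=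
  fun σ => (if ∀ v ∈ Sᶜ, σ v = τ v then μ σ else 0) / prAgree μ Sᶜ τ

/-- `μ[Ent_S(f)]`: the average over the boundary condition (distributed according to `μ`)
of the conditional entropy of `f` on `S`. -/
def avgEnt (μ : (V → Fin q) → ℝ) (S : Finset V) (f : (V → Fin q) → ℝ) : ℝ :=
  ∑ τ : V → Fin q, μ τ * entropy (condDist μ S τ) f

/-- `μ` satisfies approximate tensorization of entropy with constant `C₁`. -/
def ApproxTensorization (μ : (V → Fin q) → ℝ) (C₁ : ℝ) : Prop :=
  ∀ f : (V → Fin q) → ℝ, (∀ σ, 0 ≤ f σ) →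
    entropy μ f ≤ C₁ * ∑ v : V, avgEnt μ {v} f

/-- `μ` satisfies `ℓ`-uniform block factorization of entropy with constant `C`. -/
def UniformBlockFactorization (μ : (V → Fin q) → ℝ) (ℓ : ℕ) (C : ℝ) : Prop :=
  ∀ f : (V → Fin q) → ℝ, (∀ σ, 0 ≤ f σ) →
    ((ℓ : ℝ) / (Fintype.card V : ℝ)) * entropy μ f ≤
      C * ((Fintype.card V).choose ℓ : ℝ)⁻¹ *
        ∑ S ∈ Finset.powersetCard ℓ (Finset.univ : Finset V), avgEnt μ S f

/-- `μ` is a probability distribution. -/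
def IsProbDist (μ : (V → Fin q) → ℝ) : Prop := (∀ σ, 0 ≤ μ σ) ∧ ∑ σ, μ σ = 1

/-- Unnormalized Gibbs weight of a `q`-spin system with symmetric interaction matrix `A`
and external field `h`. -/
def gibbsWeight (G : SimpleGraph V) [DecidableRel G.Adj]
    (A : Fin q → Fin q → ℝ) (hA : ∀ i j, A i j = A j i) (h : Fin q → ℝ)
    (σ : V → Fin q) : ℝ :=
  (∏ e ∈ G.edgeFinset,
      Sym2.lift ⟨fun u v => A (σ u) (σ v), fun u v => hA (σ u) (σ v)⟩ e) *
    ∏ v : V, h (σ v)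

/-- The Glauber dynamics transition matrix for `μ`. -/
def glauberMatrix (μ : (V → Fin q) → ℝ) : Matrix (V → Fin q) (V → Fin q) ℝ :=
  Matrix.of fun σ σ' =>
    (Fintype.card V : ℝ)⁻¹ *
      ∑ v : V, if ∀ u, u ≠ v → σ' u = σ u then
        μ σ' / ∑ j : Fin q, μ (Function.update σ v j) else 0

/-- Dirichlet form of the Glauber dynamics. -/
def glauberDirichlet (μ : (V → Fin q) → ℝ) (f g : (V → Fin q) → ℝ) : ℝ :=
  (1 / 2) * ∑ σ, ∑ σ', μ σ * glauberMatrix μ σ σ' * (f σ - f σ') * (g σ - g σ')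

/-- Kullback–Leibler divergence. -/
def klDiv (ν μ : (V → Fin q) → ℝ) : ℝ := ∑ σ, ν σ * Real.log (ν σ / μ σ)

end

section Aux

variable {V : Type} [Fintype V] [DecidableEq V] {q : ℕ}

/-! ### Entropy of a finite distribution -/

theorem entropy_le_three_mul_sq (π f : (V → Fin q) → ℝ) (hπ : ∀ σ, 0 ≤ π σ) (hs : ∑ σ, π σ = 1)
    (hf : ∀ σ, 0 ≤ f σ) (M a : ℝ) (hM : 0 ≤ M)
    (hub : ∀ σ, 0 < π σ → √(f σ) ≤ M) (hlb : ∀ σ, 0 < π σ → a ≤ √(f σ)) :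
    entropy π f ≤ 3 * (M - a) ^ 2 := by
  have hm0 : 0 ≤ expec π f := Finset.sum_nonneg fun σ _ => mul_nonneg (hπ σ) (hf σ)
  rcases hm0.eq_or_lt with hm | hm
  · have : entropy π f = 0 := by
      unfold entropy; rw [← hm]; simp
    rw [this]; positivity
  have hM0 : 0 < M := by
    rcases hM.eq_or_lt with h | h
    · exfalso
      have : expec π f = 0 := by
        refine Finset.sum_eq_zero fun σ _ => ?_
        rcases (hπ σ).eq_or_lt with h' | h'
        · rw [← h']; simp
        · have h1 := hub σ h'
          rw [← h] at h1
          rw [Real.sqrt_eq_zero'.1 (le_antisymm h1 (Real.sqrt_nonneg _)) |>.antisymm (hf σ)]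
          simp
      linarith
    · exact h
  set m := expec π f with hmdef
  have key : ∀ σ, π σ * f σ * Real.log (f σ / m) ≤
      π σ * (3 * (M - a) ^ 2 - M ^ 2) + π σ * f σ * (M ^ 2 / m) := by
    intro σ
    rcases (hπ σ).eq_or_lt with h' | h'
    · rw [← h']; simp
    set g := √(f σ) with hg
    have hg0 : 0 ≤ g := Real.sqrt_nonneg _
    have hgf : g ^ 2 = f σ := Real.sq_sqrt (hf σ)
    have h1 := hub σ h'
    have h2 := hlb σ h'
    -- pointwise version of `2 g³ / M - 3 g² + M² = (M - g)² (1 + 2 g / M) ≤ 3 (M - a)²`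
    have hpoly : g ^ 2 * (2 * (g / M) - 3) + M ^ 2 ≤ 3 * (M - a) ^ 2 := by
      have e : g ^ 2 * (2 * (g / M) - 3) + M ^ 2 = (M - g) ^ 2 * (1 + 2 * (g / M)) := by
        field_simp; ring
      rw [e]
      have h3 : g / M ≤ 1 := (div_le_one hM0).2 h1
      have h4 : (M - g) ^ 2 ≤ (M - a) ^ 2 := by
        apply pow_le_pow_left₀ <;> linarith
      have h5 : 0 ≤ g / M := by positivity
      nlinarith [sq_nonneg (M - g)]
    have hlog : f σ * Real.log (f σ / m) ≤ f σ * (2 * (g / M) - 3 + M ^ 2 / m) := by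
      rcases (hf σ).eq_or_lt with h0 | h0
      · rw [← h0]; simp
      refine mul_le_mul_of_nonneg_left ?_ (hf σ)
      have hgp : 0 < g := Real.sqrt_pos.2 h0
      have e : f σ / m = (g / M) ^ 2 * (M ^ 2 / m) := by
        rw [← hgf]; field_simp
      rw [e, Real.log_mul (by positivity) (by positivity), Real.log_pow]
      have l1 := Real.log_le_sub_one_of_pos (show 0 < g / M by positivity)
      have l2 := Real.log_le_sub_one_of_pos (show 0 < M ^ 2 / m by positivity)
      push_cast
      linarith
    rw [hgf] at hpoly
    have : f σ * Real.log (f σ / m) ≤ 3 * (M - a) ^ 2 - M ^ 2 + f σ * (M ^ 2 / m) := by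
      linarith
    calc π σ * f σ * Real.log (f σ / m) = π σ * (f σ * Real.log (f σ / m)) := by ring
      _ ≤ π σ * (3 * (M - a) ^ 2 - M ^ 2 + f σ * (M ^ 2 / m)) :=
        mul_le_mul_of_nonneg_left this (hπ σ)
      _ = _ := by ring
  calc entropy π f ≤ ∑ σ, (π σ * (3 * (M - a) ^ 2 - M ^ 2) + π σ * f σ * (M ^ 2 / m)) :=
        Finset.sum_le_sum fun σ _ => key σ
    _ = (∑ σ, π σ) * (3 * (M - a) ^ 2 - M ^ 2) + m * (M ^ 2 / m) := by
        rw [Finset.sum_add_distrib, ← Finset.sum_mul, ← Finset.sum_mul, hmdef, expec]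
    _ = 3 * (M - a) ^ 2 := by
        rw [hs]; field_simp; ring

/-- `Ent_π(f) ≥ Var_π(√f)`. -/
theorem variance_sqrt_le_entropy (π f : (V → Fin q) → ℝ) (hπ : ∀ σ, 0 ≤ π σ)
    (hs : ∑ σ, π σ = 1) (hf : ∀ σ, 0 ≤ f σ) :
    ∑ σ, π σ * (√(f σ) - ∑ σ', π σ' * √(f σ')) ^ 2 ≤ entropy π f := by
  set A := ∑ σ', π σ' * √(f σ') with hA
  have hm0 : 0 ≤ expec π f := Finset.sum_nonneg fun σ _ => mul_nonneg (hπ σ) (hf σ)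
  set m := expec π f with hmdef
  have hvar : ∑ σ, π σ * (√(f σ) - A) ^ 2 = m - A ^ 2 := by
    have : ∀ σ, π σ * (√(f σ) - A) ^ 2 =
        π σ * f σ - 2 * A * (π σ * √(f σ)) + π σ * A ^ 2 := by
      intro σ
      have := Real.sq_sqrt (hf σ)
      linear_combination π σ * this
    simp only [this]
    rw [Finset.sum_add_distrib, Finset.sum_sub_distrib, ← Finset.mul_sum, ← Finset.sum_mul, hs,
      ← hA, hmdef, expec]
    ring
  rw [hvar]
  have key : ∀ σ, 2 * (π σ * f σ) - 2 * √m * (π σ * √(f σ)) ≤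
      π σ * f σ * Real.log (f σ / m) := by
    intro σ
    rcases (hπ σ).eq_or_lt with h' | h'
    · rw [← h']; simp
    rcases (hf σ).eq_or_lt with h0 | h0
    · rw [← h0]; simp
    have hm : 0 < m := by
      refine lt_of_lt_of_le (mul_pos h' h0) ?_
      rw [hmdef, expec]
      exact Finset.single_le_sum (f := fun σ => π σ * f σ)
        (fun σ _ => mul_nonneg (hπ σ) (hf σ)) (Finset.mem_univ σ)
    have hg : 0 < √(f σ) := Real.sqrt_pos.2 h0
    have hsm : 0 < √m := Real.sqrt_pos.2 hm
    have hgf := Real.sq_sqrt (hf σ)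
    have hmm := Real.sq_sqrt hm.le
    have e : f σ / m = ((√m / √(f σ)) ^ 2)⁻¹ := by
      rw [div_pow, hgf, hmm, inv_div]
    have l1 := Real.log_le_sub_one_of_pos (show 0 < √m / √(f σ) by positivity)
    rw [e, Real.log_inv, Real.log_pow]
    push_cast
    have h3 : f σ * (√m / √(f σ)) = √m * √(f σ) := by
      rw [← hgf]; field_simp; rw [Real.sqrt_sq hg.le]
    calc 2 * (π σ * f σ) - 2 * √m * (π σ * √(f σ))
        = π σ * f σ * (-(2 * (√m / √(f σ) - 1))) := by
          linear_combination 2 * π σ * h3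
      _ ≤ _ := mul_le_mul_of_nonneg_left (by linarith) (mul_nonneg h'.le h0.le)
  have hsum : 2 * m - 2 * √m * A ≤ entropy π f := by
    calc 2 * m - 2 * √m * A
        = ∑ σ, (2 * (π σ * f σ) - 2 * √m * (π σ * √(f σ))) := by
          rw [Finset.sum_sub_distrib, ← Finset.mul_sum, ← Finset.mul_sum, hA, hmdef, expec]
      _ ≤ _ := Finset.sum_le_sum fun σ _ => key σ
  nlinarith [sq_nonneg (√m - A), Real.sq_sqrt hm0]

theorem entropy_nonneg (π f : (V → Fin q) → ℝ) (hπ : ∀ σ, 0 ≤ π σ)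
    (hs : ∑ σ, π σ = 1) (hf : ∀ σ, 0 ≤ f σ) : 0 ≤ entropy π f :=
  (Finset.sum_nonneg fun σ _ => mul_nonneg (hπ σ) (sq_nonneg _)).trans
    (variance_sqrt_le_entropy π f hπ hs hf)

/-- Two atoms of mass at least `b` force `b ≤ 1/2`, so the factor `b / 2` coming from the variance
may be lowered to `b²`. -/
theorem sq_mul_sq_le_entropy (π f : (V → Fin q) → ℝ) (hπ : ∀ σ, 0 ≤ π σ)
    (hs : ∑ σ, π σ = 1) (hf : ∀ σ, 0 ≤ f σ) (b : ℝ) (hb : 0 < b) (x y : V → Fin q) (hxy : x ≠ y)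
    (hx : b ≤ π x) (hy : b ≤ π y) :
    b ^ 2 * (√(f x) - √(f y)) ^ 2 ≤ entropy π f := by
  refine le_trans ?_ (variance_sqrt_le_entropy π f hπ hs hf)
  set A := ∑ σ', π σ' * √(f σ')
  have h2 : π x + π y ≤ 1 := by
    rw [← hs, ← Finset.sum_pair hxy]
    exact Finset.sum_le_sum_of_subset_of_nonneg (Finset.subset_univ _) fun σ _ _ => hπ σ
  have h3 : π x * (√(f x) - A) ^ 2 + π y * (√(f y) - A) ^ 2 ≤
      ∑ σ, π σ * (√(f σ) - A) ^ 2 := by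
    rw [← Finset.sum_pair (f := fun σ => π σ * (√(f σ) - A) ^ 2) hxy]
    exact Finset.sum_le_sum_of_subset_of_nonneg (Finset.subset_univ _)
      fun σ _ _ => mul_nonneg (hπ σ) (sq_nonneg _)
  refine le_trans ?_ h3
  generalize √(f x) = u at *
  generalize √(f y) = w at *
  have h4 := mul_le_mul_of_nonneg_right hx (sq_nonneg (u - A))
  have h5 := mul_le_mul_of_nonneg_right hy (sq_nonneg (w - A))
  have h6 : b ^ 2 ≤ b / 2 := by nlinarith
  have h7 := mul_le_mul_of_nonneg_right h6 (sq_nonneg (u - w))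
  nlinarith [mul_nonneg hb.le (sq_nonneg (u - A + (w - A)))]

/-! ### Conditional distributions -/

theorem prAgree_congr (μ : (V → Fin q) → ℝ) (Λ : Finset V) (τ τ' : V → Fin q)
    (h : ∀ v ∈ Λ, τ v = τ' v) : prAgree μ Λ τ = prAgree μ Λ τ' := by
  unfold prAgree
  refine Finset.sum_congr rfl fun σ _ => ?_
  have : (∀ v ∈ Λ, σ v = τ v) ↔ (∀ v ∈ Λ, σ v = τ' v) :=
    forall₂_congr fun v hv => by rw [h v hv]
  simp only [this]

theorem condDist_congr (μ : (V → Fin q) → ℝ) (S : Finset V) (τ τ' : V → Fin q)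
    (h : ∀ v ∈ Sᶜ, τ v = τ' v) : condDist μ S τ = condDist μ S τ' := by
  funext σ
  unfold condDist
  rw [prAgree_congr μ _ τ τ' h]
  have : (∀ v ∈ Sᶜ, σ v = τ v) ↔ (∀ v ∈ Sᶜ, σ v = τ' v) :=
    forall₂_congr fun v hv => by rw [h v hv]
  simp only [this]

theorem le_prAgree (μ : (V → Fin q) → ℝ) (hμ : ∀ σ, 0 ≤ μ σ) (Λ : Finset V) (σ : V → Fin q) :
    μ σ ≤ prAgree μ Λ σ := by
  have := Finset.single_le_sum (f := fun s : V → Fin q => if ∀ v ∈ Λ, s v = σ v then μ s else 0)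
    (fun s _ => by split_ifs <;> simp [hμ]) (Finset.mem_univ σ)
  simpa [prAgree] using this

theorem condDist_nonneg (μ : (V → Fin q) → ℝ) (hμ : ∀ σ, 0 ≤ μ σ) (S : Finset V)
    (τ σ : V → Fin q) : 0 ≤ condDist μ S τ σ := by
  unfold condDist prAgree
  refine div_nonneg ?_ (Finset.sum_nonneg fun s _ => ?_) <;> split_ifs <;> simp [hμ]

theorem condDist_sum (μ : (V → Fin q) → ℝ) (S : Finset V)
    (τ : V → Fin q) (h : 0 < prAgree μ Sᶜ τ) : ∑ σ, condDist μ S τ σ = 1 := by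
  unfold condDist
  rw [← Finset.sum_div]
  exact div_self h.ne'

theorem condDist_pos_iff (μ : (V → Fin q) → ℝ) (S : Finset V)
    (τ σ : V → Fin q) (h : 0 < prAgree μ Sᶜ τ) :
    0 < condDist μ S τ σ ↔ 0 < μ σ ∧ ∀ v ∈ Sᶜ, σ v = τ v := by
  unfold condDist
  rw [div_pos_iff_of_pos_right h]
  split_ifs with h1
  · exact ⟨fun h => ⟨h, h1⟩, fun h => h.1⟩
  · exact ⟨fun h => absurd h (lt_irrefl _), fun h => absurd h.2 h1⟩

theorem prAgree_insert_ge (μ : (V → Fin q) → ℝ) (hμ : ∀ σ, 0 ≤ μ σ) (b : ℝ)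
    (hmb : MarginallyBounded μ b) (σ : V → Fin q) (hσ : 0 < μ σ) (Λ : Finset V) (v : V)
    (hv : v ∉ Λ) : b * prAgree μ Λ σ ≤ prAgree μ (insert v Λ) σ := by
  have hΛ := hσ.trans_le (le_prAgree μ hμ Λ σ)
  have h1 := hσ.trans_le (le_prAgree μ hμ (insert v Λ) σ)
  have e : condProb μ Λ σ v (σ v) = prAgree μ (insert v Λ) σ / prAgree μ Λ σ := by
    unfold condProb; rw [Function.update_eq_self]
  have := hmb Λ (fun h => hv (h ▸ Finset.mem_univ v)) σ hΛ v hv (σ v) (by rw [e]; positivity)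
  rw [e, le_div_iff₀ hΛ] at this
  exact this

theorem prAgree_union_ge (μ : (V → Fin q) → ℝ) (hμ : ∀ σ, 0 ≤ μ σ) (b : ℝ) (hb : 0 < b)
    (hmb : MarginallyBounded μ b) (σ : V → Fin q) (hσ : 0 < μ σ) (Λ W : Finset V) :
    Disjoint W Λ → b ^ W.card * prAgree μ Λ σ ≤ prAgree μ (W ∪ Λ) σ := by
  induction W using Finset.induction_on with
  | empty => intro _; simp
  | insert v W hv ih =>
    intro hd
    rw [Finset.disjoint_insert_left] at hd
    rw [Finset.card_insert_of_notMem hv, Finset.insert_union, pow_succ]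
    have h1 := ih hd.2
    have h2 := prAgree_insert_ge μ hμ b hmb σ hσ (W ∪ Λ) v (by simp [hv, hd.1])
    nlinarith

theorem prAgree_univ (μ : (V → Fin q) → ℝ) (σ : V → Fin q) :
    prAgree μ Finset.univ σ = μ σ := by
  unfold prAgree
  rw [Finset.sum_eq_single σ]
  · simp
  · intro s _ hs
    rw [if_neg]
    exact fun h => hs (funext fun v => h v (Finset.mem_univ v))
  · simp

/-- The chain rule together with marginal boundedness bounds every feasible conditional
probability of a block from below. -/
theorem pow_card_le_condDist (μ : (V → Fin q) → ℝ) (hμ : ∀ σ, 0 ≤ μ σ) (b : ℝ) (hb : 0 < b)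
    (hmb : MarginallyBounded μ b) (σ τ : V → Fin q) (hσ : 0 < μ σ) (S : Finset V)
    (h : ∀ v ∈ Sᶜ, σ v = τ v) :
    b ^ S.card ≤ condDist μ S τ σ := by
  rw [← condDist_congr μ S σ τ h]
  have h1 := prAgree_union_ge μ hμ b hb hmb σ hσ Sᶜ S disjoint_compl_right
  rw [Finset.union_compl, prAgree_univ] at h1
  have h2 := hσ.trans_le (le_prAgree μ hμ Sᶜ σ)
  unfold condDist
  rw [if_pos fun _ _ => rfl, le_div_iff₀ h2]
  exact h1

/-! ### Paths -/

/-- Cauchy–Schwarz along a walk, when each step `a → a'` satisfies `(g a - g a')² ≤ H a`. -/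
theorem sq_sub_le_length_mul_sum {α : Type*} (G : SimpleGraph α) (g H : α → ℝ)
    (hH : ∀ a, 0 ≤ H a) (hstep : ∀ a a', G.Adj a a' → (g a - g a') ^ 2 ≤ H a) {x y : α}
    (w : G.Walk x y) : (g x - g y) ^ 2 ≤ w.length * (w.support.map H).sum := by
  induction w with
  | nil => simp
  | @cons x z y h p ih =>
    simp only [SimpleGraph.Walk.length_cons, SimpleGraph.Walk.support_cons, List.map_cons,
      List.sum_cons]
    push_cast
    have hS : 0 ≤ (p.support.map H).sum := by
      apply List.sum_nonneg
      intro a ha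
      obtain ⟨c, _, rfl⟩ := List.mem_map.1 ha
      exact hH c
    generalize (p.support.map H).sum = S at *
    have hl : (0 : ℝ) ≤ p.length := Nat.cast_nonneg _
    generalize (p.length : ℝ) = l at *
    have h1 := hstep x z h
    have h0 := hH x
    have e : g x - g y = (g x - g z) + (g z - g y) := by ring
    rw [e]
    generalize g x - g z = A at *
    generalize g z - g y = B at *
    have h2 : 2 * (A * B) ≤ l * H x + S := by
      refine abs_le_of_sq_le_sq' ?_ (by positivity) |>.2
      have : A ^ 2 * B ^ 2 ≤ H x * (l * S) := mul_le_mul h1 ih (sq_nonneg _) h0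
      nlinarith [sq_nonneg (l * H x - S)]
    nlinarith

/-- The Hamming graph on the configurations satisfying `P`. -/
def hammingGraph {W : Type} {q : ℕ} (P : (W → Fin q) → Prop) :
    SimpleGraph {σ : W → Fin q // P σ} where
  Adj a c := HammingAdj a.1 c.1
  symm := ⟨by
    rintro a c ⟨v, hv, h⟩
    exact ⟨v, hv.symm, fun u hu => h u hu.symm⟩⟩
  loopless := ⟨by
    rintro a ⟨v, hv, -⟩
    exact hv rfl⟩

theorem hammingGraph_reachable {W : Type} {q : ℕ} (P : (W → Fin q) → Prop)
    (x : {σ : W → Fin q // P σ}) (σ : W → Fin q) (h : Relation.ReflTransGen (fun a c => HammingAdj a c ∧ P c) x.1 σ) :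
    ∃ hσ : P σ, (hammingGraph P).Reachable x ⟨σ, hσ⟩ := by
  induction h with
  | refl => exact ⟨x.2, SimpleGraph.Reachable.refl _⟩
  | tail _ hbc ih =>
    obtain ⟨hb, hr⟩ := ih
    exact ⟨hbc.2, hr.trans (SimpleGraph.Adj.reachable (G := hammingGraph P) hbc.1)⟩

/-- The entropy bound with the length `l` of a simple path in the support still explicit. -/
theorem exists_length_entropy_le
    (b : ℝ) (hb0 : 0 < b) (μ : (V → Fin q) → ℝ) (hprob : IsProbDist μ)
    (htc : TotallyConnected μ) (hmb : MarginallyBounded μ b)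
    (U : Finset V) (hU : U.Nonempty) (ξ : V → Fin q) (hξ : 0 < prAgree μ Uᶜ ξ)
    (f : (V → Fin q) → ℝ) (hf : ∀ σ, 0 ≤ f σ) :
    ∃ l : ℕ, (l + 1 : ℝ) * b ^ U.card ≤ 1 ∧
      entropy (condDist μ U ξ) f * b ^ (U.card + 2) ≤ 3 * l *
        ∑ v ∈ U, ∑ τ : V → Fin q, condDist μ U ξ τ * entropy (condDist μ {v} τ) f := by
  obtain ⟨hμ, -⟩ := hprob
  let P : (V → Fin q) → Prop := fun σ => 0 < μ σ ∧ ∀ v ∈ Uᶜ, σ v = ξ v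
  have hP : ∀ σ, 0 < condDist μ U ξ σ ↔ P σ := fun σ => condDist_pos_iff μ U ξ σ hξ
  have hπ := condDist_nonneg μ hμ U ξ
  have hs := condDist_sum μ U ξ hξ
  have hpow : ∀ σ, P σ → b ^ U.card ≤ condDist μ U ξ σ := fun σ hσ =>
    pow_card_le_condDist μ hμ b hb0 hmb σ ξ hσ.1 U hσ.2
  have hloc : ∀ σ, 0 < μ σ → ∀ v, 0 ≤ entropy (condDist μ {v} σ) f := fun σ hσ v =>
    entropy_nonneg _ f (condDist_nonneg μ hμ _ _)
      (condDist_sum μ _ _ (hσ.trans_le (le_prAgree μ hμ _ _))) hf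
  have hne : Nonempty {σ // P σ} := by
    by_contra hcon
    have : ∑ σ, condDist μ U ξ σ = 0 := by
      refine Finset.sum_eq_zero fun σ _ => le_antisymm (not_lt.1 fun h => ?_) (hπ σ)
      exact hcon ⟨⟨σ, (hP σ).1 h⟩⟩
    linarith
  let g : {σ // P σ} → ℝ := fun σ => √(f σ.1)
  let F : {σ // P σ} → ℝ := fun σ => ∑ v ∈ U, entropy (condDist μ {v} σ.1) f
  have hF : ∀ a, 0 ≤ F a := fun a => Finset.sum_nonneg fun v _ => hloc a.1 a.2.1 v
  obtain ⟨x, hx⟩ := Finite.exists_max g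
  obtain ⟨y, hy⟩ := Finite.exists_min g
  obtain ⟨_, hr⟩ := hammingGraph_reachable P x y.1
    (htc U hU ξ hξ x.1 y.1 x.2.1 x.2.2 y.2.1 y.2.2)
  obtain ⟨w, hw⟩ := hr.exists_isPath
  have hsumP : ∀ h : (V → Fin q) → ℝ, (∀ σ, 0 ≤ condDist μ U ξ σ * h σ) →
      ∑ a : {σ // P σ}, condDist μ U ξ a.1 * h a.1 ≤ ∑ σ, condDist μ U ξ σ * h σ := by
    intro h hh
    rw [← Finset.sum_subtype (Finset.univ.filter P) (fun σ => by simp)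
      (fun σ => condDist μ U ξ σ * h σ)]
    exact Finset.sum_le_sum_of_subset_of_nonneg (Finset.subset_univ _) fun σ _ _ => hh σ
  refine ⟨w.length, ?_, ?_⟩
  · have hlen : w.length + 1 ≤ Fintype.card {σ // P σ} := hw.length_lt
    have hlen' : (w.length + 1 : ℝ) ≤ Fintype.card {σ // P σ} := by exact_mod_cast hlen
    calc (w.length + 1 : ℝ) * b ^ U.card ≤ Fintype.card {σ // P σ} * b ^ U.card :=
          mul_le_mul_of_nonneg_right hlen' (by positivity)
      _ = ∑ _a : {σ // P σ}, b ^ U.card := by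
          rw [Finset.sum_const, Finset.card_univ, nsmul_eq_mul]
      _ ≤ ∑ a : {σ // P σ}, condDist μ U ξ a.1 * 1 :=
          Finset.sum_le_sum fun a _ => by rw [mul_one]; exact hpow a.1 a.2
      _ ≤ ∑ σ, condDist μ U ξ σ * 1 := hsumP (fun _ => 1) fun σ => by simpa using hπ σ
      _ = 1 := by simpa using hs
  have hstep : ∀ a c, (hammingGraph P).Adj a c → (g a - g c) ^ 2 ≤ (b ^ 2)⁻¹ * F a := by
    rintro a c ⟨v, hv, huniq⟩
    have hoff : ∀ u, u ≠ v → a.1 u = c.1 u := fun u hu => by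
      by_contra h
      exact hu (huniq u h)
    have hvU : v ∈ U := by
      by_contra h
      have h' : v ∈ Uᶜ := Finset.mem_compl.2 h
      exact hv ((a.2.2 v h').trans (c.2.2 v h').symm)
    have hba := pow_card_le_condDist μ hμ b hb0 hmb a.1 a.1 a.2.1 {v} (fun _ _ => rfl)
    have hbc := pow_card_le_condDist μ hμ b hb0 hmb c.1 a.1 c.2.1 {v}
      (fun u hu => (hoff u (by simpa using hu)).symm)
    rw [Finset.card_singleton, pow_one] at hba hbc
    have h1 := sq_mul_sq_le_entropy (condDist μ {v} a.1) f (condDist_nonneg μ hμ _ _)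
      (condDist_sum μ _ _ (a.2.1.trans_le (le_prAgree μ hμ _ _))) hf b hb0 a.1 c.1
      (fun h => hv (congrFun h v)) hba hbc
    have h2 : entropy (condDist μ {v} a.1) f ≤ F a :=
      Finset.single_le_sum (f := fun v => entropy (condDist μ {v} a.1) f)
        (fun u _ => hloc a.1 a.2.1 u) hvU
    rw [inv_mul_eq_div, le_div_iff₀ (by positivity), mul_comm]
    exact h1.trans h2
  have hpath := sq_sub_le_length_mul_sum (hammingGraph P) g (fun a => (b ^ 2)⁻¹ * F a)
    (fun a => mul_nonneg (by positivity) (hF a)) hstep w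
  have hsupp : (w.support.map fun a => (b ^ 2)⁻¹ * F a).sum ≤ (b ^ 2)⁻¹ * ∑ a, F a := by
    rw [← List.sum_toFinset _ hw.support_nodup, Finset.mul_sum]
    exact Finset.sum_le_sum_of_subset_of_nonneg (Finset.subset_univ _)
      fun a _ _ => mul_nonneg (by positivity) (hF a)
  have hent := entropy_le_three_mul_sq (condDist μ U ξ) f hπ hs hf (g x) (g y)
    (Real.sqrt_nonneg _) (fun σ hσ => hx ⟨σ, (hP σ).1 hσ⟩) (fun σ hσ => hy ⟨σ, (hP σ).1 hσ⟩)
  have hFS : b ^ U.card * ∑ a, F a ≤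
      ∑ v ∈ U, ∑ τ : V → Fin q, condDist μ U ξ τ * entropy (condDist μ {v} τ) f := by
    have h1 : b ^ U.card * ∑ a, F a ≤ ∑ a : {σ // P σ}, condDist μ U ξ a.1 * F a := by
      rw [Finset.mul_sum]
      exact Finset.sum_le_sum fun a _ => mul_le_mul_of_nonneg_right (hpow a.1 a.2) (hF a)
    have h2 : ∑ v ∈ U, ∑ τ : V → Fin q, condDist μ U ξ τ * entropy (condDist μ {v} τ) f =
        ∑ τ : V → Fin q, condDist μ U ξ τ * ∑ v ∈ U, entropy (condDist μ {v} τ) f := by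
      rw [Finset.sum_comm]
      simp only [Finset.mul_sum]
    refine h1.trans (le_of_le_of_eq ?_ h2.symm)
    refine hsumP (fun σ => ∑ v ∈ U, entropy (condDist μ {v} σ) f) fun σ => ?_
    rcases (hπ σ).eq_or_lt with h | h
    · rw [← h, zero_mul]
    · exact mul_nonneg h.le (Finset.sum_nonneg fun v _ => hloc σ ((hP σ).1 h).1 v)
  set S := ∑ v ∈ U, ∑ τ : V → Fin q, condDist μ U ξ τ * entropy (condDist μ {v} τ) f
  have hD : (g x - g y) ^ 2 * b ^ 2 ≤ w.length * ∑ a, F a := by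
    have := hpath.trans (mul_le_mul_of_nonneg_left hsupp (Nat.cast_nonneg _))
    calc (g x - g y) ^ 2 * b ^ 2 ≤ (w.length * ((b ^ 2)⁻¹ * ∑ a, F a)) * b ^ 2 :=
          mul_le_mul_of_nonneg_right this (by positivity)
      _ = w.length * ∑ a, F a := by field_simp
  calc entropy (condDist μ U ξ) f * b ^ (U.card + 2)
      ≤ 3 * (g x - g y) ^ 2 * b ^ (U.card + 2) :=
        mul_le_mul_of_nonneg_right hent (by positivity)
    _ = 3 * ((g x - g y) ^ 2 * b ^ 2) * b ^ U.card := by ring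
    _ ≤ 3 * (w.length * ∑ a, F a) * b ^ U.card := by gcongr
    _ = 3 * w.length * (b ^ U.card * ∑ a, F a) := by ring
    _ ≤ 3 * w.length * S := by gcongr

theorem sum_condDist_mul_entropy_singleton (μ : (V → Fin q) → ℝ) (v : V) (ξ : V → Fin q)
    (hξ : 0 < prAgree μ {v}ᶜ ξ) (f : (V → Fin q) → ℝ) :
    ∑ τ, condDist μ {v} ξ τ * entropy (condDist μ {v} τ) f = entropy (condDist μ {v} ξ) f := by
  have : ∀ τ, condDist μ {v} ξ τ * entropy (condDist μ {v} τ) f =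
      condDist μ {v} ξ τ * entropy (condDist μ {v} ξ) f := by
    intro τ
    by_cases h : ∀ u ∈ ({v} : Finset V)ᶜ, τ u = ξ u
    · rw [condDist_congr μ {v} τ ξ h]
    · have : condDist μ {v} ξ τ = 0 := by
        unfold condDist; rw [if_neg h, zero_div]
      rw [this]; simp
  simp only [this]
  rw [← Finset.sum_mul, condDist_sum μ _ _ hξ, one_mul]

end Aux

/-- **Crude approximate tensorization for conditional distributions** (Lemma 4.2): for a
totally-connected, `b`-marginally bounded distribution `μ`, every nonempty `U ⊆ V` and
feasible boundary condition `ξ` on `V∖U`, the conditional entropy on `U` tensorizes into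
single vertices with constant `3·|U|²·log(1/b)/(2·b^{2|U|+2})`. -/
theorem crude_conditional_approx_tensorization
    (b : ℝ) (hb0 : 0 < b) (hb1 : b < 1)
    {V : Type} [Fintype V] [DecidableEq V] {q : ℕ} (hq : 2 ≤ q)
    (μ : (V → Fin q) → ℝ) (hprob : IsProbDist μ)
    (htc : TotallyConnected μ) (hmb : MarginallyBounded μ b)
    (U : Finset V) (hU : U.Nonempty) (ξ : V → Fin q) (hξ : 0 < prAgree μ Uᶜ ξ)
    (f : (V → Fin q) → ℝ) (hf : ∀ σ, 0 ≤ f σ) :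
    entropy (condDist μ U ξ) f ≤
      (3 * (U.card : ℝ) ^ 2 * Real.log (1 / b) / (2 * b ^ (2 * U.card + 2))) *
        ∑ v ∈ U, ∑ τ : V → Fin q, condDist μ U ξ τ * entropy (condDist μ {v} τ) f := by
  
  obtain ⟨l, hl, hent⟩ := exists_length_entropy_le b hb0 μ hprob htc hmb U hU ξ hξ f hf
  have hμ := hprob.1
  have hπ := condDist_nonneg μ hμ U ξ
  have hS : 0 ≤ ∑ v ∈ U, ∑ τ : V → Fin q,
      condDist μ U ξ τ * entropy (condDist μ {v} τ) f := by
    refine Finset.sum_nonneg fun v _ => Finset.sum_nonneg fun τ _ => ?_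
    rcases (hπ τ).eq_or_lt with h | h
    · rw [← h, zero_mul]
    · have hτ := ((condDist_pos_iff μ U ξ τ hξ).1 h).1
      exact mul_nonneg h.le (entropy_nonneg _ f (condDist_nonneg μ hμ _ _)
        (condDist_sum μ _ _ (hτ.trans_le (le_prAgree μ hμ _ _))) hf)
  have hL : 0 < Real.log (1 / b) := Real.log_pos (by rw [lt_div_iff₀ hb0]; linarith)
  have hn : 1 ≤ U.card := hU.card_pos
  rcases Nat.eq_zero_or_pos l with hl0 | hl0
  · have h0 : entropy (condDist μ U ξ) f ≤ 0 := by
      rw [hl0] at hent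
      have hb : 0 < b ^ (U.card + 2) := by positivity
      by_contra hc
      have := mul_pos (not_le.1 hc) hb
      simp only [Nat.cast_zero, mul_zero, zero_mul] at hent
      linarith
    exact h0.trans (mul_nonneg (by positivity) hS)
  rcases hn.eq_or_lt with hn1 | hn2
  · -- a single vertex: the sum is the entropy itself, and `l ≥ 1` forces `b ≤ 1/2`
    obtain ⟨v, rfl⟩ := Finset.card_eq_one.1 hn1.symm
    rw [Finset.sum_singleton] at hS ⊢
    rw [sum_condDist_mul_entropy_singleton μ v ξ hξ f] at hS ⊢
    refine le_mul_of_one_le_left hS ?_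
    have hl1 : (1 : ℝ) ≤ l := by exact_mod_cast hl0
    rw [Finset.card_singleton] at hl ⊢
    have hb2 : b ≤ 1 / 2 := by nlinarith
    have h1 : 1 - b ≤ Real.log (1 / b) := by
      have := Real.log_le_sub_one_of_pos hb0
      rw [one_div, Real.log_inv]; linarith
    rw [le_div_iff₀ (by positivity)]
    have h3 : b ^ (2 * 1 + 2) ≤ (1 / 2 : ℝ) ^ (2 * 1 + 2) := pow_le_pow_left₀ hb0.le hb2 _
    norm_num at h3 ⊢
    rw [one_div] at h1
    rw [Real.log_inv] at h1
    linarith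
  · have hn2' : (2 : ℝ) ≤ U.card := by exact_mod_cast hn2
    have h1 : 1 - b ^ U.card ≤ U.card * Real.log (1 / b) := by
      have := Real.log_le_sub_one_of_pos (show 0 < b ^ U.card by positivity)
      rw [Real.log_pow] at this
      rw [one_div, Real.log_inv]; linarith
    have h2 : 2 * (l * b ^ U.card) ≤ (U.card : ℝ) ^ 2 * Real.log (1 / b) := by
      have h3 : (l : ℝ) * b ^ U.card ≤ U.card * Real.log (1 / b) := by linarith
      nlinarith [mul_nonneg (sub_nonneg.2 hn2') (mul_nonneg (zero_le_two.trans hn2') hL.le)]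
    rw [div_mul_eq_mul_div, le_div_iff₀ (by positivity)]
    calc _ = 2 * b ^ U.card * (entropy (condDist μ U ξ) f * b ^ (U.card + 2)) := by ring
      _ ≤ 2 * b ^ U.card * (3 * l * ∑ v ∈ U, ∑ τ : V → Fin q,
            condDist μ U ξ τ * entropy (condDist μ {v} τ) f) := by gcongr
      _ = 3 * (2 * (l * b ^ U.card)) * ∑ v ∈ U, ∑ τ : V → Fin q,
            condDist μ U ξ τ * entropy (condDist μ {v} τ) f := by ring
      _ ≤ 3 * ((U.card : ℝ) ^ 2 * Real.log (1 / b)) * ∑ v ∈ U, ∑ τ : V → Fin q,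
            condDist μ U ξ τ * entropy (condDist μ {v} τ) f := by gcongr
      _ = _ := by ring
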